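/- Let m ∈ ℕ, ε > 0, κ > 0, let V : ℝᵐ → ℝ be twice continuously differentiable, and suppose q : ℝᵐ × ℝᵐ × ℝ → ℝ is twice continuously differentiable in (ξ,η), continuously differentiable in s, and satisfies ∂q/∂s = ⟨η, ∇_ξq⟩ − ⟨∇_ξV(ξ) + κη, ∇_ηq⟩ + εκ Δ_ηq at every (ξ,η,s). Define p(ξ,ϑ,s) := q(ξ,−ϑ,s)·exp(−(1/ε)((1/2)‖ϑ‖² + V(ξ))). Then p satisfies the kinetic Fokker–Planck equation ∂p/∂s = −⟨ϑ, ∇_ξp⟩ + ∇_ϑ·(p (∇_ξV(ξ) + κϑ)) + εκ Δ_ϑp at every (ξ,ϑ,s). -/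

import Mathlib

open scoped BigOperators

/-- Partial derivative in the `i`-th coordinate direction of the first block variable `ξ`. -/
noncomputable def pdXi {m : ℕ} (i : Fin m)
    (g : EuclideanSpace ℝ (Fin m) → EuclideanSpace ℝ (Fin m) → ℝ)
    (ξ η : EuclideanSpace ℝ (Fin m)) : ℝ :=
  fderiv ℝ (fun ξ' => g ξ' η) ξ (EuclideanSpace.single i 1)

/-- Partial derivative in the `i`-th coordinate direction of the second block variable. -/
noncomputable def pdEta {m : ℕ} (i : Fin m)
    (g : EuclideanSpace ℝ (Fin m) → EuclideanSpace ℝ (Fin m) → ℝ)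
    (ξ η : EuclideanSpace ℝ (Fin m)) : ℝ :=
  fderiv ℝ (fun η' => g ξ η') η (EuclideanSpace.single i 1)

/-- Partial derivative in the `i`-th coordinate direction of a scalar function on `ℝᵐ`. -/
noncomputable def pd {m : ℕ} (i : Fin m) (f : EuclideanSpace ℝ (Fin m) → ℝ)
    (x : EuclideanSpace ℝ (Fin m)) : ℝ :=
  fderiv ℝ f x (EuclideanSpace.single i 1)


lemma aux_pd_mul {m : ℕ} (i : Fin m) {f g : EuclideanSpace ℝ (Fin m) → ℝ}
    {x : EuclideanSpace ℝ (Fin m)} (hf : DifferentiableAt ℝ f x) (hg : DifferentiableAt ℝ g x) :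
    pd i (fun y => f y * g y) x = pd i f x * g x + f x * pd i g x := by
  unfold pd
  rw [fderiv_fun_mul hf hg]
  simp
  ring

lemma aux_pd_neg {m : ℕ} (i : Fin m) {f : EuclideanSpace ℝ (Fin m) → ℝ}
    {x : EuclideanSpace ℝ (Fin m)} (hf : DifferentiableAt ℝ f (-x)) :
    pd i (fun y => f (-y)) x = - pd i f (-x) := by
  unfold pd
  have h := hf.hasFDerivAt.comp x ((hasFDerivAt_id x).neg)
  have h2 : HasFDerivAt (fun y => f (-y)) _ x := h
  rw [h2.fderiv]
  simp

lemma aux_pd_exp {m : ℕ} (i : Fin m) (k c : ℝ) (x : EuclideanSpace ℝ (Fin m)) :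
    pd i (fun y => Real.exp (k * ((1/2) * ‖y‖^2 + c))) x
      = k * x i * Real.exp (k * ((1/2) * ‖x‖^2 + c)) := by
  unfold pd
  have h := (((((hasStrictFDerivAt_norm_sq x).hasFDerivAt).const_mul (1/2 : ℝ)).add_const c).const_mul
    k).exp
  rw [h.fderiv]
  simp [EuclideanSpace.inner_single_right]
  ring

lemma aux_diff_exp {m : ℕ} (k c : ℝ) :
    Differentiable ℝ (fun y : EuclideanSpace ℝ (Fin m) =>
      Real.exp (k * ((1/2) * ‖y‖^2 + c))) := by
  have : Differentiable ℝ (fun y : EuclideanSpace ℝ (Fin m) => ‖y‖^2) :=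
    differentiable_id.norm_sq ℝ
  fun_prop

lemma aux_pd_expV {m : ℕ} (i : Fin m) (k c : ℝ) {V : EuclideanSpace ℝ (Fin m) → ℝ}
    {x : EuclideanSpace ℝ (Fin m)} (hV : DifferentiableAt ℝ V x) :
    pd i (fun y => Real.exp (k * (c + V y))) x
      = k * pd i V x * Real.exp (k * (c + V x)) := by
  unfold pd
  have h := (((hV.hasFDerivAt).const_add c).const_mul k).exp
  rw [h.fderiv]
  simp
  ring

lemma aux_pd_coord {m : ℕ} (i : Fin m) (a κ : ℝ) (x : EuclideanSpace ℝ (Fin m)) :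
    pd i (fun y : EuclideanSpace ℝ (Fin m) => a + κ * y i) x = κ := by
  unfold pd
  have h0 : HasFDerivAt (fun y : EuclideanSpace ℝ (Fin m) => y i)
    (EuclideanSpace.proj i : EuclideanSpace ℝ (Fin m) →L[ℝ] ℝ) x :=
    (EuclideanSpace.proj i : EuclideanSpace ℝ (Fin m) →L[ℝ] ℝ).hasFDerivAt
  rw [((h0.const_mul κ).const_add a).fderiv]
  simp

lemma aux_diff_coord {m : ℕ} (i : Fin m) (a κ : ℝ) :
    Differentiable ℝ (fun y : EuclideanSpace ℝ (Fin m) => a + κ * y i) := by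
  have h0 : Differentiable ℝ (fun y : EuclideanSpace ℝ (Fin m) => y i) :=
    (EuclideanSpace.proj i : EuclideanSpace ℝ (Fin m) →L[ℝ] ℝ).differentiable
  fun_prop

lemma aux_diff_pd {m : ℕ} (i : Fin m) {f : EuclideanSpace ℝ (Fin m) → ℝ}
    (hf : ContDiff ℝ 2 f) : Differentiable ℝ (pd i f) := by
  have h : Differentiable ℝ (fderiv ℝ f) :=
    (hf.fderiv_right (m := 1) (by norm_num)).differentiable (by norm_num)
  intro x
  exact (h x).clm_apply (differentiableAt_const _)

/-- the transform `p(ξ,ϑ,s) := q(ξ,−ϑ,s)·exp(−(1/ε)(‖ϑ‖²/2 + V(ξ)))`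
of a solution `q` of the reversed kinetic backward Kolmogorov equation satisfies the
kinetic Fokker–Planck equation. -/
theorem kinetic_transform_to_fokker_planck
    (m : ℕ) (ε κ : ℝ) (hε : 0 < ε) (hκ : 0 < κ)
    (V : EuclideanSpace ℝ (Fin m) → ℝ) (hV : ContDiff ℝ 2 V)
    (q : EuclideanSpace ℝ (Fin m) → EuclideanSpace ℝ (Fin m) → ℝ → ℝ)
    (hqx : ∀ s, ContDiff ℝ 2 fun p : EuclideanSpace ℝ (Fin m) × EuclideanSpace ℝ (Fin m) =>
      q p.1 p.2 s)
    (hqs : ∀ ξ η, ContDiff ℝ 1 fun s => q ξ η s)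
    (hq : ∀ (ξ η : EuclideanSpace ℝ (Fin m)) (s : ℝ),
      deriv (fun σ => q ξ η σ) s
        = (∑ i, η i * pdXi i (fun a b => q a b s) ξ η)
          - (∑ i, (pd i V ξ + κ * η i) * pdEta i (fun a b => q a b s) ξ η)
          + ε * κ * ∑ i, pdEta i (fun a b => pdEta i (fun c d => q c d s) a b) ξ η)
    (p : EuclideanSpace ℝ (Fin m) → EuclideanSpace ℝ (Fin m) → ℝ → ℝ)
    (hp : ∀ ξ ϑ s, p ξ ϑ s
      = q ξ (-ϑ) s * Real.exp (-(1/ε) * ((1/2) * ‖ϑ‖^2 + V ξ))) :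
    ∀ (ξ ϑ : EuclideanSpace ℝ (Fin m)) (s : ℝ),
      deriv (fun σ => p ξ ϑ σ) s
        = -(∑ i, ϑ i * pdXi i (fun a b => p a b s) ξ ϑ)
          + (∑ i, pdEta i (fun a b => p a b s * (pd i V a + κ * b i)) ξ ϑ)
          + ε * κ * ∑ i, pdEta i (fun a b => pdEta i (fun c d => p c d s) a b) ξ ϑ := by
  intro ξ ϑ s
  have hVd : Differentiable ℝ V := hV.differentiable (by norm_num)
  have hQ2 : ContDiff ℝ 2 (fun b => q ξ b s) :=
    (hqx s).comp (contDiff_const.prodMk contDiff_id)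
  have hQd : Differentiable ℝ (fun b => q ξ b s) := hQ2.differentiable (by norm_num)
  have hQx : Differentiable ℝ (fun a => q a (-ϑ) s) :=
    ((hqx s).comp (contDiff_id.prodMk contDiff_const)).differentiable (by norm_num)
  have hQn : Differentiable ℝ (fun b => q ξ (-b) s) := hQd.comp differentiable_id.neg
  have hE := aux_diff_exp (m := m) (-(1/ε)) (V ξ)
  have hpfun : p = fun ξ ϑ s => q ξ (-ϑ) s * Real.exp (-(1/ε) * ((1/2) * ‖ϑ‖^2 + V ξ)) := by
    funext a b c
    exact hp a b c
  have hpd : Differentiable ℝ (fun b => p ξ b s) := by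
    rw [hpfun]; exact hQn.mul hE
  -- derivative in time
  have hs : deriv (fun σ => p ξ ϑ σ) s = deriv (fun σ => q ξ (-ϑ) σ) s
      * Real.exp (-(1/ε) * ((1/2) * ‖ϑ‖^2 + V ξ)) := by
    rw [hpfun]
    exact deriv_mul_const (((hqs ξ (-ϑ)).differentiable (by norm_num)) s) _
  -- derivative in ξ
  have hx : ∀ i, pdXi i (fun a b => p a b s) ξ ϑ
      = (pdXi i (fun a b => q a b s) ξ (-ϑ) - (1/ε) * pd i V ξ * q ξ (-ϑ) s)
        * Real.exp (-(1/ε) * ((1/2) * ‖ϑ‖^2 + V ξ)) := by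
    intro i
    rw [hpfun]
    have h := aux_pd_mul i (x := ξ) (hQx ξ)
      (g := fun a => Real.exp (-(1/ε) * ((1/2) * ‖ϑ‖^2 + V a))) (by fun_prop)
    rw [aux_pd_expV i _ _ (hVd ξ)] at h
    change pd i (fun a => q a (-ϑ) s * Real.exp (-(1/ε) * ((1/2) * ‖ϑ‖^2 + V a))) ξ = _
    rw [h]
    change _ = (pd i (fun a => q a (-ϑ) s) ξ - _) * _
    ring
  -- first derivative in ϑ
  have h1 : ∀ i b, pd i (fun b => p ξ b s) b
      = (- pd i (fun b => q ξ b s) (-b) + (0 + (-(1/ε)) * b i) * q ξ (-b) s)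
        * Real.exp (-(1/ε) * ((1/2) * ‖b‖^2 + V ξ)) := by
    intro i b
    rw [hpfun]
    have h := aux_pd_mul i (x := b) (hQn b) (hE b)
    rw [aux_pd_exp, aux_pd_neg i (f := fun b => q ξ b s) (hQd _)] at h
    rw [h]
    ring
  have h2 : ∀ i, pd i (pd i (fun b => p ξ b s)) ϑ
      = (pd i (pd i (fun b => q ξ b s)) (-ϑ) + 2 * (1/ε) * ϑ i * pd i (fun b => q ξ b s) (-ϑ)
          - (1/ε) * q ξ (-ϑ) s + (1/ε)^2 * (ϑ i)^2 * q ξ (-ϑ) s)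
        * Real.exp (-(1/ε) * ((1/2) * ‖ϑ‖^2 + V ξ)) := by
    intro i
    have hD := aux_diff_pd i hQ2
    have hDn : Differentiable ℝ (fun b => pd i (fun b => q ξ b s) (-b)) :=
      hD.comp differentiable_id.neg
    have hC := aux_diff_coord (m := m) i 0 (-(1/ε))
    have e1 : pd i (fun b => p ξ b s) = fun b =>
        pd i (fun b => q ξ b s) (-b) * (-1 * Real.exp (-(1/ε) * ((1/2) * ‖b‖^2 + V ξ)))
        + ((0 + (-(1/ε)) * b i) * p ξ b s) := by
      funext b
      rw [h1, hp]; ring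
    have a1 := aux_pd_mul i (hDn ϑ) ((hE.const_mul (-1)) ϑ)
    have a2 := aux_pd_mul i (hC ϑ) (hpd ϑ)
    have a3 := aux_pd_mul i (differentiableAt_const (-1 : ℝ)) (hE ϑ)
    have a0 : pd i (fun _ : EuclideanSpace ℝ (Fin m) => (-1 : ℝ)) ϑ = 0 := by simp [pd]
    rw [aux_pd_coord, h1, hp] at a2
    rw [a0, aux_pd_exp] at a3
    rw [a3, aux_pd_neg i (hD _)] at a1
    rw [e1]
    have a4 := fderiv_fun_add ((hDn.mul (hE.const_mul (-1))) ϑ) ((hC.mul hpd) ϑ)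
    have a5 := congrArg (fun L => L (EuclideanSpace.single i 1)) a4
    refine Eq.trans a5 (Eq.trans (congrArg₂ (· + ·) a1 a2) ?_)
    ring
  have hdiv : ∀ i, pdEta i (fun a b => p a b s * (pd i V a + κ * b i)) ξ ϑ
      = ((pd i V ξ + κ * ϑ i) * (- pd i (fun b => q ξ b s) (-ϑ) - (1/ε) * ϑ i * q ξ (-ϑ) s)
          + κ * q ξ (-ϑ) s) * Real.exp (-(1/ε) * ((1/2) * ‖ϑ‖^2 + V ξ)) := by
    intro i
    have h := aux_pd_mul i (hpd ϑ) (aux_diff_coord (m := m) i (pd i V ξ) κ ϑ)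
    rw [aux_pd_coord, h1, hp] at h
    refine Eq.trans h ?_
    ring
  have h2' : ∀ i, pdEta i (fun a b => pdEta i (fun c d => p c d s) a b) ξ ϑ = _ := h2
  rw [hs, hq]
  simp only [hx, hdiv, h2']
  have c1 : ∀ i, pdEta i (fun a b => q a b s) ξ (-ϑ) = pd i (fun b => q ξ b s) (-ϑ) :=
    fun i => rfl
  have c2 : ∀ i, pdEta i (fun a b => pdEta i (fun c d => q c d s) a b) ξ (-ϑ)
    = pd i (pd i (fun b => q ξ b s)) (-ϑ) := fun i => rfl
  simp only [c1, c2, PiLp.neg_apply]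
  rw [add_mul, sub_mul, Finset.mul_sum, Finset.mul_sum, Finset.sum_mul, Finset.sum_mul,
    Finset.sum_mul, ← Finset.sum_sub_distrib, ← Finset.sum_add_distrib, ← Finset.sum_neg_distrib,
    ← Finset.sum_add_distrib, ← Finset.sum_add_distrib]
  refine Finset.sum_congr rfl fun i _ => ?_
  field_simp
  ring
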